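/- arXiv:2409.00417 — 4 statements merged into one kernel-verified Lean document; each statement's English description precedes it below -/
import Mathlib

section
/- Let p ∈ ℕ and let B be a p × p real matrix (indexed by Fin p) whose edge relation E, defined by 'E k l iff B l k ≠ 0' (a directed edge from k to l), is acyclic, i.e. the transitive closure of E is irreflexive. Then B is nilpotent, I − B is invertible, and for D := (I − B)⁻¹ one has: D i i = 1 for every i, and for every pair i ≠ j, D j i equals the sum over all directed paths π from i to j of the products of edge coefficients along π, i.e. D j i = Σ_{π} Π_{t < m(π)} B k_{t+1} k_t where π ranges over the (finitely many) sequences i = k₀, k₁, …, k_{m(π)} = j with m(π) ≥ 1 and E k_t k_{t+1} for every t. (This quantity is the total effect from variable i to variable j.) -/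
open scoped Classical

noncomputable section

/-- Directed edge from `k` to `l` in the causal graph of coefficient matrix `B`. -/
def edgeRel {p : ℕ} (B : Matrix (Fin p) (Fin p) ℝ) (k l : Fin p) : Prop := B l k ≠ 0

/-- `B` is acyclic: the transitive closure of its edge relation is irreflexive. -/
def Acyclic {p : ℕ} (B : Matrix (Fin p) (Fin p) ℝ) : Prop :=
  Irreflexive (Relation.TransGen (edgeRel B))

theorem irr_of {p : ℕ} (B : Matrix (Fin p) (Fin p) ℝ) (h : Acyclic B) (i : Fin p)
    (hi : Relation.TransGen (edgeRel B) i i) : False := by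
  unfold Acyclic at h
  exact h i hi

theorem pow_entry {p : ℕ} (B : Matrix (Fin p) (Fin p) ℝ) (m : ℕ) (j i : Fin p) :
    (B ^ m) j i = ∑ f : Fin (m + 1) → Fin p,
      if f 0 = i ∧ f (Fin.last m) = j then ∏ t : Fin m, B (f t.succ) (f t.castSucc) else 0 := by
  induction m generalizing i with
  | zero =>
    rw [← (Equiv.funUnique (Fin 1) (Fin p)).symm.sum_comp]
    simp [Matrix.one_apply, ite_and, eq_comm]
  | succ m ih =>
    rw [pow_succ, Matrix.mul_apply, ← (Fin.consEquiv (fun _ => Fin p)).sum_comp,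
      Fintype.sum_prod_type]
    symm
    rw [Finset.sum_eq_single i]
    · symm
      simp only [ih, Finset.sum_mul]
      rw [Finset.sum_comm]
      refine Finset.sum_congr rfl fun g _ => ?_
      rw [Finset.sum_eq_single (g 0)]
      · simp [Fin.consEquiv, Fin.prod_univ_succ (n := m), ← Fin.succ_last, ← Fin.succ_castSucc, mul_comm]
      · intro b _ hb
        simp [hb.symm]
      · simp
    · intro b _ hb
      simp [Fin.consEquiv, hb]
    · simp

theorem path_trans {p : ℕ} (B : Matrix (Fin p) (Fin p) ℝ) (m : ℕ) (f : Fin (m + 1) → Fin p)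
    (hE : ∀ t : Fin m, edgeRel B (f t.castSucc) (f t.succ)) (a b : Fin (m + 1)) (hab : a < b) :
    Relation.TransGen (edgeRel B) (f a) (f b) := by
  induction b using Fin.induction with
  | zero => exact absurd hab (Fin.not_lt_zero a)
  | succ t ih =>
    rcases (Fin.le_castSucc_iff.mpr hab).lt_or_eq with h | h
    · exact (ih h).tail (hE t)
    · rw [h]
      exact .single (hE t)

theorem stmt0 (p : ℕ) (B : Matrix (Fin p) (Fin p) ℝ) (hacyc : Acyclic B) :
    IsNilpotent B ∧ IsUnit (1 - B) ∧ (∀ i, (1 - B)⁻¹ i i = 1) ∧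
      ∀ i j : Fin p, i ≠ j →
        (1 - B)⁻¹ j i =
          ∑ m ∈ Finset.range p,
            ∑ f ∈ Finset.univ.filter
                (fun f : Fin (m + 2) → Fin p =>
                  f 0 = i ∧ f (Fin.last (m + 1)) = j ∧
                    ∀ t : Fin (m + 1), edgeRel B (f t.castSucc) (f t.succ)),
              ∏ t : Fin (m + 1), B (f t.succ) (f t.castSucc) := by
  have hpow : ∀ m : ℕ, p ≤ m → B ^ m = 0 := by
    intro m hm
    ext j i
    rw [pow_entry, Matrix.zero_apply]
    refine Finset.sum_eq_zero fun f _ => ?_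
    split_ifs with h
    · by_contra hne
      have hE : ∀ t : Fin m, edgeRel B (f t.castSucc) (f t.succ) := fun t =>
        Finset.prod_ne_zero_iff.mp hne t (Finset.mem_univ t)
      obtain ⟨a, b, hab, hfab⟩ := Fintype.exists_ne_map_eq_of_card_lt f (by simp; omega)
      rcases lt_or_gt_of_ne hab with h1 | h1
      · have := path_trans B m f hE a b h1
        rw [hfab] at this
        exact irr_of B hacyc _ this
      · have := path_trans B m f hE b a h1
        rw [hfab] at this
        exact irr_of B hacyc _ this
    · rfl
  have hdiag : ∀ (m : ℕ) (i : Fin p), (B ^ (m + 1)) i i = 0 := by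
    intro m i
    rw [pow_entry]
    refine Finset.sum_eq_zero fun f _ => ?_
    split_ifs with h
    · by_contra hne
      have hE : ∀ t : Fin (m + 1), edgeRel B (f t.castSucc) (f t.succ) := fun t =>
        Finset.prod_ne_zero_iff.mp hne t (Finset.mem_univ t)
      have := path_trans B (m + 1) f hE 0 (Fin.last (m + 1)) (Fin.last_pos)
      rw [h.1, h.2] at this
      exact irr_of B hacyc _ this
    · rfl
  have hmul : (1 - B) * ∑ m ∈ Finset.range (p + 1), B ^ m = 1 := by
    rw [mul_neg_geom_sum, hpow (p + 1) (by omega), sub_zero]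
  have hinv : (1 - B)⁻¹ = ∑ m ∈ Finset.range (p + 1), B ^ m := Matrix.inv_eq_right_inv hmul
  refine ⟨⟨p, hpow p le_rfl⟩, IsUnit.of_mul_eq_one _ hmul, ?_, ?_⟩
  · intro i
    rw [hinv, Matrix.sum_apply, Finset.sum_range_succ', Finset.sum_eq_zero fun m _ => hdiag m i]
    simp
  · intro i j hij
    rw [hinv, Matrix.sum_apply, Finset.sum_range_succ', pow_zero, Matrix.one_apply_ne hij.symm,
      add_zero]
    refine Finset.sum_congr rfl fun m _ => ?_
    rw [pow_entry, Finset.sum_filter]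
    refine Finset.sum_congr rfl fun f _ => ?_
    by_cases h : f 0 = i ∧ f (Fin.last (m + 1)) = j
    · by_cases hE : ∀ t : Fin (m + 1), edgeRel B (f t.castSucc) (f t.succ)
      · rw [if_pos h, if_pos ⟨h.1, h.2, hE⟩]
      · rw [if_pos h, if_neg fun h' => hE h'.2.2]
        push Not at hE
        obtain ⟨t, ht⟩ := hE
        exact Finset.prod_eq_zero (Finset.mem_univ t) (not_not.mp ht)
    · rw [if_neg h, if_neg fun h' => h ⟨h'.1, h'.2.1⟩]
end
end

section
/- Let p ∈ ℕ and let B be a p × p real matrix whose edge relation E (defined by 'E k l iff B l k ≠ 0') is acyclic, and set D := (I − B)⁻¹. Let i, j, k be indices with k ≠ j. If every directed path from k to j passes through the vertex i (i.e., i occurs among the vertices of every such path), then D j k = D j i · D i k. -/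
open scoped Classical

noncomputable section

/-- A directed path from `k` to `j`: a sequence `k = f 0, f 1, …, f m = j` with `m ≥ 1`
and an edge `f t → f (t+1)` for every `t < m`. -/
def IsDirectedPath {p : ℕ} (B : Matrix (Fin p) (Fin p) ℝ) (k j : Fin p) (m : ℕ)
    (f : ℕ → Fin p) : Prop :=
  1 ≤ m ∧ f 0 = k ∧ f m = j ∧ ∀ t < m, edgeRel B (f t) (f (t + 1))

/-- The path `f 0, …, f m` passes through the vertex `i`. -/
def PassesThrough {p : ℕ} (i : Fin p) (m : ℕ) (f : ℕ → Fin p) : Prop :=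
  ∃ t ≤ m, f t = i

theorem aux_wf {p : ℕ} (B : Matrix (Fin p) (Fin p) ℝ) (h : Acyclic B) :
    WellFounded (Relation.TransGen (edgeRel B)) := by
  haveI : Std.Irrefl (Relation.TransGen (edgeRel B)) := ⟨fun a => h a⟩
  exact Finite.wellFounded_of_trans_of_irrefl _

theorem aux_unit {p : ℕ} (B : Matrix (Fin p) (Fin p) ℝ) (h : Acyclic B) :
    IsUnit (1 - B) := by
  rw [← Matrix.mulVec_injective_iff_isUnit]
  have key : ∀ v : Fin p → ℝ, (1 - B).mulVec v = 0 → v = 0 := by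
    intro v hv
    funext l
    induction l using (aux_wf B h).induction with
    | _ l ih =>
      have h1 := congrFun hv l
      rw [Matrix.sub_mulVec, Matrix.one_mulVec] at h1
      simp only [Pi.sub_apply, Pi.zero_apply] at h1
      have h2 : B.mulVec v l = 0 := by
        rw [Matrix.mulVec, dotProduct]
        refine Finset.sum_eq_zero fun m _ => ?_
        by_cases hb : B l m = 0
        · simp [hb]
        · rw [ih m (Relation.TransGen.single hb)]; simp
      rw [h2] at h1
      simpa using h1
  intro v w hvw
  have := key (v - w) (by rw [Matrix.mulVec_sub]; exact sub_eq_zero.mpr hvw)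
  exact sub_eq_zero.mp this

theorem aux_rec {p : ℕ} (B : Matrix (Fin p) (Fin p) ℝ) (h : Acyclic B) (l k : Fin p) :
    (1 - B)⁻¹ l k = (if l = k then 1 else 0) + ∑ m, B l m * (1 - B)⁻¹ m k := by
  have h1 : (1 - B) * (1 - B)⁻¹ = 1 :=
    Matrix.mul_nonsing_inv _ ((Matrix.isUnit_iff_isUnit_det _).mp (aux_unit B h))
  rw [sub_mul, one_mul, sub_eq_iff_eq_add] at h1
  have h2 := congrFun (congrFun h1 l) k
  rw [Matrix.add_apply, Matrix.mul_apply, Matrix.one_apply] at h2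
  exact h2

theorem aux_supp {p : ℕ} (B : Matrix (Fin p) (Fin p) ℝ) (h : Acyclic B) (k l : Fin p) :
    (1 - B)⁻¹ l k ≠ 0 → Relation.ReflTransGen (edgeRel B) k l := by
  induction l using (aux_wf B h).induction with
  | _ l ih =>
    intro hne
    by_cases hlk : l = k
    · subst hlk; exact Relation.ReflTransGen.refl
    rw [aux_rec B h, if_neg hlk, zero_add] at hne
    obtain ⟨m, _, hm⟩ := Finset.exists_ne_zero_of_sum_ne_zero hne
    have hb : edgeRel B m l := left_ne_zero_of_mul hm
    exact (ih m (Relation.TransGen.single hb) (right_ne_zero_of_mul hm)).tail hb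

theorem aux_diag {p : ℕ} (B : Matrix (Fin p) (Fin p) ℝ) (h : Acyclic B) (k : Fin p) :
    (1 - B)⁻¹ k k = 1 := by
  rw [aux_rec B h, if_pos rfl, Finset.sum_eq_zero, add_zero]
  intro m _
  by_contra hm
  have hb : edgeRel B m k := left_ne_zero_of_mul hm
  exact h k (Relation.TransGen.tail' (aux_supp B h k m (right_ne_zero_of_mul hm)) hb)

theorem aux_main {p : ℕ} (B : Matrix (Fin p) (Fin p) ℝ) (h : Acyclic B) (i k l : Fin p) :
    ¬ Relation.ReflTransGen (fun a b => edgeRel B a b ∧ b ≠ i) k l →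
    (1 - B)⁻¹ l k = (1 - B)⁻¹ l i * (1 - B)⁻¹ i k := by
  induction l using (aux_wf B h).induction with
  | _ l ih =>
    intro hA
    by_cases hli : l = i
    · subst hli; rw [aux_diag B h, one_mul]
    have hlk : l ≠ k := by
      rintro rfl
      exact hA Relation.ReflTransGen.refl
    rw [aux_rec B h l k, aux_rec B h l i, if_neg hlk, if_neg hli, zero_add, zero_add,
      Finset.sum_mul]
    refine Finset.sum_congr rfl fun m _ => ?_
    by_cases hb : B l m = 0
    · simp [hb]
    · rw [ih m (Relation.TransGen.single hb) (fun hm => hA (hm.tail ⟨hb, hli⟩)), mul_assoc]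

theorem aux_path {p : ℕ} (B : Matrix (Fin p) (Fin p) ℝ) (i k l : Fin p) (hki : k ≠ i)
    (hA : Relation.ReflTransGen (fun a b => edgeRel B a b ∧ b ≠ i) k l) :
    ∃ (m : ℕ) (f : ℕ → Fin p), f 0 = k ∧ f m = l ∧
      (∀ t < m, edgeRel B (f t) (f (t + 1))) ∧ ∀ t ≤ m, f t ≠ i := by
  induction hA with
  | refl => exact ⟨0, fun _ => k, rfl, rfl, by simp, fun _ _ => hki⟩
  | @tail b c _ hbc ih =>
    obtain ⟨m, f, h0, hm, he, hi⟩ := ih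
    refine ⟨m + 1, fun t => if t ≤ m then f t else c, by simp [h0], by simp, ?_, ?_⟩
    · intro t ht
      by_cases htm : t = m
      · subst htm
        simpa [hm] using hbc.1
      · have h1 : t ≤ m := by omega
        have h2 : t + 1 ≤ m := by omega
        simp only [h1, h2, if_true]
        exact he t (by omega)
    · intro t ht
      by_cases h1 : t ≤ m
      · simp only [h1, if_true]; exact hi t h1
      · simp only [h1, if_false]; exact hbc.2

theorem stmt1 (p : ℕ) (B : Matrix (Fin p) (Fin p) ℝ) (hacyc : Acyclic B)
    (i j k : Fin p) (hkj : k ≠ j)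
    (hpass : ∀ (m : ℕ) (f : ℕ → Fin p), IsDirectedPath B k j m f → PassesThrough i m f) :
    (1 - B)⁻¹ j k = (1 - B)⁻¹ j i * (1 - B)⁻¹ i k := by
  by_cases hki : k = i
  · subst hki; rw [aux_diag B hacyc, mul_one]
  apply aux_main B hacyc
  intro hA
  obtain ⟨m, f, h0, hm, he, hi⟩ := aux_path B i k j hki hA
  have h1 : 1 ≤ m := by
    rcases Nat.eq_zero_or_pos m with rfl | h
    · exact absurd (h0.symm.trans hm) hkj
    · exact h
  obtain ⟨t, ht, hti⟩ := hpass m f ⟨h1, h0, hm, he⟩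
  exact hi t ht hti
end
end

section
/- Every directed moral graph (DMG) has exactly one source node, i.e. exactly one vertex with no parents. -/
/-- The edge relation has no directed cycles: its transitive closure is irreflexive. -/
def IsDAGRel {V : Type} (E : V → V → Prop) : Prop :=
  Irreflexive (Relation.TransGen E)

/-- Weak connectivity: the reflexive–transitive closure of the symmetrization of `E`
relates every pair of vertices. -/
def WeaklyConnectedRel {V : Type} (E : V → V → Prop) : Prop :=
  ∀ a b : V, Relation.ReflTransGen (fun u v => E u v ∨ E v u) a b

/-- The moral condition: any two distinct parents of a common child are adjacent. -/
def MoralRel {V : Type} (E : V → V → Prop) : Prop :=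
  ∀ k i j : V, E i k → E j k → i ≠ j → (E i j ∨ E j i)

/-- A directed moral graph (DMG): a weakly connected DAG satisfying the moral condition. -/
def IsDMG {V : Type} (E : V → V → Prop) : Prop :=
  IsDAGRel E ∧ WeaklyConnectedRel E ∧ MoralRel E

/-- The edge relation of the induced subgraph on `V' ⊆ V`. -/
def inducedRel {V : Type} (E : V → V → Prop) (V' : Set V) : V' → V' → Prop :=
  fun a b => E a b

open Relation in
theorem aux_unique {V : Type} (E : V → V → Prop) (hw : WellFounded E) (hm : MoralRel E) (v : V) :
    ∀ s t : V, (∀ i, ¬ E i s) → (∀ i, ¬ E i t) → ReflTransGen E s v → ReflTransGen E t v →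
      s = t := by
  induction v using hw.induction with
  | _ v ih =>
    intro s t hs ht h1 h2
    rcases ReflTransGen.cases_tail h1 with h | ⟨p, hp, hpv⟩
    · subst h
      rcases ReflTransGen.cases_tail h2 with h | ⟨q, hq, hqv⟩
      · exact h
      · exact absurd hqv (hs q)
    · rcases ReflTransGen.cases_tail h2 with h | ⟨q, hq, hqv⟩
      · subst h
        exact absurd hpv (ht p)
      · by_cases hpq : p = q
        · subst hpq
          exact ih p hpv s t hs ht hp hq
        · rcases hm v p q hpv hqv hpq with h | h
          · exact ih q hqv s t hs ht (hp.tail h) hq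
          · exact ih p hpv s t hs ht hp (hq.tail h)

open Relation in
theorem aux_exists {V : Type} (E : V → V → Prop) (hw : WellFounded E) (v : V) :
    ∃ s : V, (∀ i, ¬ E i s) ∧ ReflTransGen E s v := by
  induction v using hw.induction with
  | _ v ih =>
    by_cases h : ∃ p, E p v
    · obtain ⟨p, hp⟩ := h
      obtain ⟨s, hs, h1⟩ := ih p hp
      exact ⟨s, hs, h1.tail hp⟩
    · exact ⟨v, fun i hi => h ⟨i, hi⟩, .refl⟩

theorem stmt15 (V : Type) [Fintype V] [Nonempty V] (E : V → V → Prop)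
    (hdmg : IsDMG E) :
    ∃! s : V, ∀ i : V, ¬ E i s := by
  obtain ⟨hd, hc, hm⟩ := hdmg
  have hw : WellFounded E := by
    have : IsTrans V (Relation.TransGen E) := ⟨fun _ _ _ h1 h2 => h1.trans h2⟩
    have : Std.Irrefl (Relation.TransGen E) := ⟨fun a => hd a⟩
    exact Subrelation.wf (fun h => Relation.TransGen.single h)
      (Finite.wellFounded_of_trans_of_irrefl (Relation.TransGen E))
  obtain ⟨s, hs, -⟩ := aux_exists E hw (Classical.arbitrary V)
  refine ⟨s, hs, fun t ht => ?_⟩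
  have key : ∀ b, Relation.ReflTransGen (fun u v => E u v ∨ E v u) s b →
      Relation.ReflTransGen E s b := by
    intro b hb
    induction hb with
    | refl => exact .refl
    | tail _ h ih =>
      rcases h with h | h
      · exact ih.tail h
      · obtain ⟨r, hr, h1⟩ := aux_exists E hw _
        have := aux_unique E hw hm _ s r hs hr ih (h1.tail h)
        subst this
        exact h1
  exact (aux_unique E hw hm t s t hs ht (key t (hc s t)) .refl).symm
end

section
/- Let G = (V, E) be a weakly connected finite DAG. The following three conditions are equivalent: (i) G is a directed moral graph (DMG); (ii) for every nonempty V' ⊆ V such that the induced subgraph G(V') is weakly connected, G(V') is a DMG; (iii) for every nonempty V' ⊆ V such that the induced subgraph G(V') is weakly connected, G(V') has exactly one source node. -/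
theorem aux_wf_s16 {W : Type} [Finite W] (R : W → W → Prop) (hd : IsDAGRel R) : WellFounded R := by
  have : Std.Irrefl (Relation.TransGen R) := ⟨hd⟩
  have h := Finite.wellFounded_of_trans_of_irrefl (Relation.TransGen R)
  exact Subrelation.wf (fun h => Relation.TransGen.single h) h

theorem aux_src {W : Type} (R : W → W → Prop) (hw : WellFounded R) (v : W) :
    ∃ s, (∀ t, ¬ R t s) ∧ Relation.ReflTransGen R s v := by
  induction v using hw.induction with
  | _ v ih =>
    by_cases h : ∃ t, R t v
    · obtain ⟨t, ht⟩ := h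
      obtain ⟨s, hs, hst⟩ := ih t ht
      exact ⟨s, hs, hst.tail ht⟩
    · exact ⟨v, fun t ht => h ⟨t, ht⟩, Relation.ReflTransGen.refl⟩

theorem aux_uniq {W : Type} (R : W → W → Prop) (hw : WellFounded R) (hm : MoralRel R) (v : W) :
    ∀ s t, (∀ x, ¬ R x s) → (∀ x, ¬ R x t) → Relation.ReflTransGen R s v →
      Relation.ReflTransGen R t v → s = t := by
  induction v using hw.induction with
  | _ v ih =>
    intro s t hs ht hsv htv
    rcases Relation.ReflTransGen.cases_tail hsv with h1 | ⟨p, hsp, hpv⟩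
    · subst h1
      rcases Relation.ReflTransGen.cases_tail htv with h2 | ⟨q, _, hqv⟩
      · exact h2
      · exact absurd hqv (hs q)
    · rcases Relation.ReflTransGen.cases_tail htv with h2 | ⟨q, htq, hqv⟩
      · subst h2
        exact absurd hpv (ht p)
      · by_cases hpq : p = q
        · subst hpq
          exact ih p hpv s t hs ht hsp htq
        · rcases hm v p q hpv hqv hpq with h | h
          · exact ih q hqv s t hs ht (hsp.tail h) htq
          · exact ih p hpv s t hs ht hsp (htq.tail h)

theorem aux_main_s16 {W : Type} [Finite W] [Nonempty W] (R : W → W → Prop) (h : IsDMG R) :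
    ∃! s : W, ∀ t : W, ¬ R t s := by
  obtain ⟨hd, hc, hm⟩ := h
  have hw := aux_wf_s16 R hd
  obtain ⟨s, hs, -⟩ := aux_src R hw (Classical.arbitrary W)
  have key : ∀ x, Relation.ReflTransGen R s x := by
    intro x
    induction hc s x with
    | refl => exact Relation.ReflTransGen.refl
    | tail _ huv ih =>
      rename_i u v _
      rcases huv with huv | hvu
      · exact ih.tail huv
      · obtain ⟨t, ht, htv⟩ := aux_src R hw v
        have := aux_uniq R hw hm u s t hs ht ih (htv.tail hvu)
        subst this
        exact htv
  refine ⟨s, hs, fun t ht => ?_⟩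
  exact aux_uniq R hw hm t t s ht hs Relation.ReflTransGen.refl (key t)

theorem aux_ind {V : Type} (E : V → V → Prop) (hd : IsDAGRel E) (hm : MoralRel E) (V' : Set V)
    (hc : WeaklyConnectedRel (inducedRel E V')) : IsDMG (inducedRel E V') := by
  refine ⟨fun a ha => ?_, hc, fun k i j hi hj hij => ?_⟩
  · exact hd a.1 (Relation.TransGen.lift Subtype.val (fun _ _ h => h) _ _ ha)
  · exact hm k i j hi hj (fun h => hij (Subtype.ext h))

theorem aux_moral {V : Type} (E : V → V → Prop) (hd : IsDAGRel E)
    (h : ∀ V' : Set V, V'.Nonempty → WeaklyConnectedRel (inducedRel E V') →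
        ∃! s : V', ∀ t : V', ¬ inducedRel E V' t s) : MoralRel E := by
  intro k i j hik hjk hij
  by_contra hcon
  push Not at hcon
  have irr : ∀ x, ¬ E x x := fun x hx => hd x (Relation.TransGen.single hx)
  have asy : ∀ x y, E x y → ¬ E y x := fun x y h1 h2 =>
    hd x ((Relation.TransGen.single h1).tail h2)
  let S : Set V := {i, j, k}
  have hiS : i ∈ S := by simp [S]
  have hjS : j ∈ S := by simp [S]
  have hkS : k ∈ S := by simp [S]
  have hconn : WeaklyConnectedRel (inducedRel E S) := by
    have to_k : ∀ x : S, x = ⟨k, hkS⟩ ∨ E x.1 k := by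
      rintro ⟨x, rfl | rfl | rfl⟩
      · exact Or.inr hik
      · exact Or.inr hjk
      · exact Or.inl rfl
    intro a b
    have ha : Relation.ReflTransGen
        (fun u v => inducedRel E S u v ∨ inducedRel E S v u) a ⟨k, hkS⟩ := by
      rcases to_k a with h | h
      · rw [h]
      · exact Relation.ReflTransGen.single (Or.inl h)
    have hb : Relation.ReflTransGen
        (fun u v => inducedRel E S u v ∨ inducedRel E S v u) ⟨k, hkS⟩ b := by
      rcases to_k b with h | h
      · rw [h]
      · exact Relation.ReflTransGen.single (Or.inr h)
    exact ha.trans hb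
  have hu := (h S ⟨i, hiS⟩ hconn).unique (y₁ := ⟨i, hiS⟩) (y₂ := ⟨j, hjS⟩) ?_ ?_
  · exact hij (congrArg Subtype.val hu)
  · rintro ⟨x, rfl | rfl | rfl⟩
    · exact irr _
    · exact hcon.2
    · exact asy _ _ hik
  · rintro ⟨x, rfl | rfl | rfl⟩
    · exact hcon.1
    · exact irr _
    · exact asy _ _ hjk

theorem stmt16 (V : Type) [Fintype V] [Nonempty V] (E : V → V → Prop)
    (hdag : IsDAGRel E) (hconn : WeaklyConnectedRel E) :
    (IsDMG E ↔
      ∀ V' : Set V, V'.Nonempty → WeaklyConnectedRel (inducedRel E V') →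
        IsDMG (inducedRel E V')) ∧
    ((∀ V' : Set V, V'.Nonempty → WeaklyConnectedRel (inducedRel E V') →
        IsDMG (inducedRel E V')) ↔
      ∀ V' : Set V, V'.Nonempty → WeaklyConnectedRel (inducedRel E V') →
        ∃! s : V', ∀ t : V', ¬ inducedRel E V' t s) := by
  have h23 : (∀ V' : Set V, V'.Nonempty → WeaklyConnectedRel (inducedRel E V') →
        IsDMG (inducedRel E V')) →
      ∀ V' : Set V, V'.Nonempty → WeaklyConnectedRel (inducedRel E V') →
        ∃! s : V', ∀ t : V', ¬ inducedRel E V' t s := by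
    intro h V' hne hc
    have : Nonempty V' := hne.to_subtype
    exact aux_main_s16 _ (h V' hne hc)
  refine ⟨⟨fun h V' _ hc => aux_ind E hdag h.2.2 V' hc,
    fun h => ⟨hdag, hconn, aux_moral E hdag (h23 h)⟩⟩, h23, fun h V' _ hc =>
    aux_ind E hdag (aux_moral E hdag h) V' hc⟩
end
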